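/- In the setting of Ulam's method for the approximating maps τ_n, fix n ≥ N with a_n + D₁ < 1, and for each k ≥ 1 let f_{n,k} be a normalized fixed point of the Ulam operator P^{(k)}_{τ_n}. Then sup_k ess sup f_{n,k} ≤ D/(1 − (a_n + D₁)) < ∞, so the sequence (f_{n,k})_{k≥1} is weakly pre-compact in L¹(I,λ); and if a subsequence f_{n,k_j} converges weakly in L¹ to f (meaning ∫₀¹ g·f_{n,k_j} dλ → ∫₀¹ g·f dλ for every g ∈ L^∞(I,λ)) as k_j → ∞, then f is a fixed point of P_{τ_n}, i.e., the measure f·λ is τ_n-invariant. -/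

import Mathlib

open MeasureTheory Set Filter

/-- Lebesgue measure on the unit interval `I = [0,1]`. -/
noncomputable def lam : MeasureTheory.Measure ℝ := MeasureTheory.volume.restrict (Set.Icc 0 1)

/-- A piecewise convex map `τ` on `[0,1]` with countably many branches, whose partition
points form a strictly decreasing sequence `1 = a 0 > a 1 > ⋯` tending to `0`; on each
`[a (m+1), a m)` the map is continuous, convex and differentiable, vanishes at the left
endpoint, and has right derivative `d (m+1) = τ'(a (m+1)) > 0` there; there is `N ≥ 1`
with `D₁ = ∑_{m=N+1}^∞ 1/τ'(a m) < 1` and `C = ∑_{m=1}^∞ 1/τ'(a m) < ∞`. -/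
structure PCApprox (τ : ℝ → ℝ) (a d : ℕ → ℝ) (N : ℕ) : Prop where
  mapsTo : Set.MapsTo τ (Set.Icc 0 1) (Set.Icc 0 1)
  a_zero : a 0 = 1
  a_anti : StrictAnti a
  a_lim : Filter.Tendsto a Filter.atTop (nhds 0)
  cont : ∀ m : ℕ, ContinuousOn τ (Set.Ico (a (m+1)) (a m))
  conv : ∀ m : ℕ, ConvexOn ℝ (Set.Ico (a (m+1)) (a m)) τ
  diff : ∀ m : ℕ, ∀ x ∈ Set.Ico (a (m+1)) (a m),
    DifferentiableWithinAt ℝ τ (Set.Ico (a (m+1)) (a m)) x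
  map_a : ∀ m : ℕ, τ (a (m+1)) = 0
  deriv_a : ∀ m : ℕ, HasDerivWithinAt τ (d (m+1)) (Set.Ici (a (m+1))) (a (m+1))
  d_pos : ∀ m : ℕ, 0 < d (m+1)
  N_pos : 1 ≤ N
  sum_d : Summable fun m => 1 / d (m+1)
  D₁_lt : (∑' m : ℕ, 1 / d (m + N + 1)) < 1

/-- `D₁ = ∑_{m=N+1}^∞ 1/τ'(a m)`. -/
noncomputable def D₁ (d : ℕ → ℝ) (N : ℕ) : ℝ := ∑' m : ℕ, 1 / d (m + N + 1)

/-- `C = ∑_{m=1}^∞ 1/τ'(a m)`. -/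
noncomputable def Cconst (d : ℕ → ℝ) : ℝ := ∑' m : ℕ, 1 / d (m + 1)

/-- `D = ∑_{m=1}^N 1/(a m · τ'(a m))`. -/
noncomputable def Dconst (a d : ℕ → ℝ) (N : ℕ) : ℝ :=
  ∑ m ∈ Finset.range N, 1 / (a (m+1) * d (m+1))

/-- The approximating map `τ_n`: `τ_n x = x / a n` for `x < a n`, and `τ_n x = τ x`
for `a n ≤ x`. -/
noncomputable def tauN (τ : ℝ → ℝ) (a : ℕ → ℝ) (n : ℕ) : ℝ → ℝ :=
  fun x => if x < a n then x / a n else τ x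

/-- Essential supremum (with respect to `λ` on `[0,1]`) of a real function, valued in `ℝ≥0∞`. -/
noncomputable def esssup (f : ℝ → ℝ) : ENNReal := essSup (fun x => ENNReal.ofReal (f x)) lam

/-- The `i`-th Ulam interval `J_{i+1} = [i/k, (i+1)/k)` of the uniform partition of `[0,1]`
into `k` subintervals. -/
noncomputable def Jint (k i : ℕ) : Set ℝ := Set.Ico ((i : ℝ) / k) (((i : ℝ) + 1) / k)

/-- The Ulam projection `Q^{(k)} f = ∑_{i=1}^k (k ∫_{J_i} f dλ) · χ_{J_i}` onto functions
constant on the elements of the uniform partition into `k` subintervals. -/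
noncomputable def Qk (k : ℕ) (f : ℝ → ℝ) : ℝ → ℝ := fun x =>
  ∑ i ∈ Finset.range k,
    Set.indicator (Jint k i) (fun _ => (k : ℝ) * ∫ y in Jint k i, f y ∂lam) x

/-- `fnk` is a normalized fixed point of the Ulam operator `P^{(k)}_σ = Q^{(k)} ∘ P_σ`:
it is constant on each `J_i`, non-negative, of integral `1`, and `Q^{(k)} (P_σ fnk) = fnk`
`λ`-a.e. (where the Frobenius–Perron image `P_σ fnk` is realized by a version `g`). -/
def IsUlamFixed (σ : ℝ → ℝ) (k : ℕ) (fnk : ℝ → ℝ) : Prop :=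
  MeasureTheory.Integrable fnk lam ∧
  (∀ i : ℕ, i < k → ∀ x ∈ Jint k i, ∀ y ∈ Jint k i, fnk x = fnk y) ∧
  (∀ x ∈ Set.Icc (0:ℝ) 1, 0 ≤ fnk x) ∧
  (∫ x, fnk x ∂lam) = 1 ∧
  ∃ g : ℝ → ℝ, MeasureTheory.Integrable g lam ∧
    (∀ A : Set ℝ, MeasurableSet A → A ⊆ Set.Icc (0:ℝ) 1 →
      ∫ x in A, g x ∂lam = ∫ x in σ ⁻¹' A, fnk x ∂lam) ∧
    Qk k g =ᵐ[lam] fnk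


structure Br (T : ℝ → ℝ) (b e : ℕ → ℝ) (n : ℕ) : Prop where
  hn : 1 ≤ n
  b0 : b 0 = 1
  bn : b (n+1) = 0
  anti : ∀ i ≤ n, b (i+1) < b i
  cont : ∀ i ≤ n, ContinuousOn T (Ico (b (i+1)) (b i))
  conv : ∀ i ≤ n, ConvexOn ℝ (Ico (b (i+1)) (b i)) T
  zero : ∀ i ≤ n, T (b (i+1)) = 0
  lower : ∀ i ≤ n, ∀ x ∈ Ico (b (i+1)) (b i), e i * (x - b (i+1)) ≤ T x
  epos : ∀ i ≤ n, 0 < e i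
  lt1 : ∀ x ∈ Ico (0:ℝ) 1, T x < 1
  lin : ∀ x ∈ Ico (0:ℝ) (b n), T x = x / b n

namespace Br
variable {T : ℝ → ℝ} {b e : ℕ → ℝ} {n : ℕ}

theorem cell_aux (_h : Br T b e n) (m : ℕ) (x : ℝ) (hx : x ∈ Ico (b m) (b 0)) :
    ∃ i < m, x ∈ Ico (b (i+1)) (b i) := by
  induction m with
  | zero => exact absurd hx (by simp)
  | succ m ih =>
    by_cases hm : b m ≤ x
    · obtain ⟨i, hi, hx'⟩ := ih ⟨hm, hx.2⟩
      exact ⟨i, by omega, hx'⟩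
    · exact ⟨m, by omega, hx.1, not_le.1 hm⟩

theorem cell (h : Br T b e n) {x : ℝ} (hx : x ∈ Ico (0:ℝ) 1) :
    ∃ i ≤ n, x ∈ Ico (b (i+1)) (b i) := by
  obtain ⟨i, hi, h2⟩ := h.cell_aux (n+1) x (by rw [h.bn, h.b0]; exact hx)
  exact ⟨i, by omega, h2⟩

theorem b_anti (h : Br T b e n) {i j : ℕ} (hij : i ≤ j) (hj : j ≤ n + 1) : b j ≤ b i := by
  induction j with
  | zero => simp_all
  | succ j ih =>
    rcases Nat.lt_or_ge i (j+1) with h1 | h1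
    · exact (h.anti j (by omega)).le.trans (ih (by omega) (by omega))
    · have : i = j + 1 := by omega
      rw [this]

theorem b_nonneg (h : Br T b e n) {i : ℕ} (hi : i ≤ n + 1) : 0 ≤ b i := by
  rw [← h.bn]; exact h.b_anti hi le_rfl

theorem b_pos (h : Br T b e n) {i : ℕ} (hi : i ≤ n) : 0 < b i :=
  lt_of_le_of_lt (h.b_nonneg (by omega)) (h.anti i hi)

theorem b_le_one (h : Br T b e n) {i : ℕ} (hi : i ≤ n + 1) : b i ≤ 1 := by
  rw [← h.b0]; exact h.b_anti (by omega) hi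

theorem b_lt_one (h : Br T b e n) {i : ℕ} (hi : i ≤ n) : b (i+1) < 1 :=
  lt_of_lt_of_le (h.anti i hi) (h.b_le_one (by omega))

theorem sub (h : Br T b e n) {i : ℕ} (hi : i ≤ n) : Ico (b (i+1)) (b i) ⊆ Ico 0 1 :=
  Ico_subset_Ico (h.b_nonneg (by omega)) (h.b_le_one (by omega))

theorem nonneg (h : Br T b e n) {x : ℝ} (hx : x ∈ Ico (0:ℝ) 1) : 0 ≤ T x := by
  obtain ⟨i, hi, hx'⟩ := h.cell hx
  have := h.lower i hi x hx'
  have h2 : 0 ≤ e i * (x - b (i+1)) := mul_nonneg (h.epos i hi).le (by linarith [hx'.1])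
  linarith

theorem key (h : Br T b e n) {i : ℕ} (hi : i ≤ n) {x y : ℝ} (hx : b (i+1) ≤ x) (hxy : x ≤ y)
    (hy : y < b i) : (y - b (i+1)) * T x ≤ (x - b (i+1)) * T y := by
  rcases eq_or_lt_of_le (hx.trans hxy) with h0 | h0
  · have : x = b (i+1) := le_antisymm (by linarith) hx
    have hy' : y = b (i+1) := h0.symm
    subst this; rw [hy']; 
  · have hc := (h.conv i hi).2 (show b (i+1) ∈ Ico (b (i+1)) (b i) from ⟨le_rfl, h.anti i hi⟩)
      (show y ∈ Ico (b (i+1)) (b i) from ⟨h0.le, hy⟩)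
      (show 0 ≤ (y - x) / (y - b (i+1)) from div_nonneg (by linarith) (by linarith))
      (show 0 ≤ (x - b (i+1)) / (y - b (i+1)) from div_nonneg (by linarith) (by linarith))
      (by rw [← add_div, div_eq_one_iff_eq (by linarith)]; ring)
    have hp : 0 < y - b (i+1) := by linarith
    simp only [smul_eq_mul, h.zero i hi] at hc
    have e1 : (y - x) / (y - b (i+1)) * b (i+1) + (x - b (i+1)) / (y - b (i+1)) * y = x := by
      field_simp; ring
    rw [e1] at hc
    have := mul_le_mul_of_nonneg_left hc hp.le
    calc _ ≤ _ := this
      _ = _ := by field_simp; ring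

theorem smono (h : Br T b e n) {i : ℕ} (hi : i ≤ n) : StrictMonoOn T (Ico (b (i+1)) (b i)) := by
  intro x hx y hy hxy
  have hk := h.key hi hx.1 hxy.le hy.2
  have hy0 : 0 < T y := by
    have h1 := h.lower i hi y hy
    have : 0 < e i * (y - b (i+1)) := mul_pos (h.epos i hi) (by linarith [hx.1])
    linarith
  have h1 : 0 < y - b (i+1) := by linarith [hx.1]
  by_contra hcon
  push Not at hcon
  have : (y - b (i+1)) * T y ≤ (x - b (i+1)) * T y := (mul_le_mul_of_nonneg_left hcon h1.le).trans hk
  nlinarith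

/-- support argument -/
theorem supp (h : Br T b e n) {k : ℕ} (hk : 1 ≤ k) (S : ℕ → Prop)
    (hS : ∀ x ∈ Ico (0:ℝ) 1, S ⌊(k:ℝ) * x⌋₊ → S ⌊(k:ℝ) * T x⌋₊) (h0 : ¬ S 0) :
    ∀ j < k, ¬ S j := by
  classical
  intro j hj hSj
  have hk0 : (0:ℝ) < k := by exact_mod_cast hk
  let F : Finset (ℕ × ℕ) := (Finset.range (k+1) ×ˢ Finset.range (k+1)).filter
    (fun w => w.1 < w.2 ∧ ∀ t, w.1 ≤ t → t < w.2 → S t)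
  have hF : ∀ p q : ℕ, (p, q) ∈ F ↔ (q ≤ k ∧ p < q ∧ ∀ t, p ≤ t → t < q → S t) := by
    intro p q
    simp only [F, Finset.mem_filter, Finset.mem_product, Finset.mem_range]
    constructor
    · rintro ⟨⟨_, _⟩, h1, h2⟩; exact ⟨by omega, h1, h2⟩
    · rintro ⟨h1, h2, h3⟩; exact ⟨⟨by omega, by omega⟩, h2, h3⟩
  have hne : F.Nonempty := ⟨(j, j+1), (hF _ _).2 ⟨by omega, by omega, fun t h1 h2 => by
    have : t = j := by omega
    rw [this]; exact hSj⟩⟩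
  obtain ⟨w0, hw0, hmax0⟩ := F.exists_max_image (fun w => (w.2:ℝ) / w.1) hne
  obtain ⟨⟨p, q⟩, hw, hmax1⟩ := (F.filter (fun w => (w.2:ℝ) / w.1 = (w0.2:ℝ) / w0.1)).exists_max_image
    (fun w => w.1) ⟨w0, by simp [hw0]⟩
  rw [Finset.mem_filter] at hw
  obtain ⟨hpq, hr⟩ := hw
  have hmax : ∀ p' q' : ℕ, (p', q') ∈ F → (q':ℝ) / p' ≤ (q:ℝ) / p := by
    intro p' q' hm
    simp only at hr
    rw [hr]; exact hmax0 _ hm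
  have hmax2 : ∀ p' q' : ℕ, (p', q') ∈ F → (q:ℝ) / p ≤ (q':ℝ) / p' → p' ≤ p := by
    intro p' q' hm hle
    refine hmax1 (p', q') (Finset.mem_filter.2 ⟨hm, ?_⟩)
    simp only at hr ⊢
    rw [← hr]; exact le_antisymm (hmax _ _ hm) hle
  obtain ⟨hqk, hplq, hSpq⟩ := (hF p q).1 hpq
  have hp1 : 1 ≤ p := by
    rcases Nat.eq_zero_or_pos p with h1 | h1
    · exact absurd (hSpq 0 (by omega) (by omega)) h0
    · exact h1
  have hp0 : (0:ℝ) < p := by exact_mod_cast hp1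
  have hplq' : (p:ℝ) < q := by exact_mod_cast hplq
  have hqk' : (q:ℝ) ≤ k := by exact_mod_cast hqk
  have hfl : ∀ x : ℝ, (p:ℝ)/k ≤ x → x < (q:ℝ)/k → S ⌊(k:ℝ)*x⌋₊ := by
    intro x h1 h2
    rw [div_le_iff₀ hk0] at h1
    rw [lt_div_iff₀ hk0] at h2
    apply hSpq
    · exact Nat.le_floor (by linarith)
    · exact (Nat.floor_lt (by nlinarith)).2 (by linarith)
  have hq1 : (q:ℝ)/k ≤ 1 := (div_le_one hk0).2 hqk'
  set x0 : ℝ := (p:ℝ)/k with hx0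
  have hx0p : 0 < x0 := by positivity
  have hx0q : x0 < (q:ℝ)/k := by rw [hx0]; gcongr
  obtain ⟨i, hi, hxi⟩ := h.cell (x := x0) ⟨hx0p.le, by linarith⟩
  have hqB : (q:ℝ)/k ≤ b i := by
    by_contra hc
    push Not at hc
    cases i with
    | zero => rw [h.b0] at hc; linarith
    | succ i =>
      have h1 := hS (b (i+1)) ⟨h.b_nonneg (by omega), by linarith⟩ (hfl _ hxi.2.le hc)
      rw [h.zero i (by omega)] at h1
      simp at h1; exact h0 h1
  have hI : ∀ x : ℝ, x0 ≤ x → x < (q:ℝ)/k → x ∈ Ico (0:ℝ) 1 := fun x h1 h2 => ⟨by linarith, by linarith⟩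
  have hx0A : b (i+1) < x0 := by
    rcases eq_or_lt_of_le hxi.1 with h1 | h1
    · have h2 := hS x0 (hI _ le_rfl hx0q) (hfl _ le_rfl hx0q)
      rw [← h1, h.zero i hi] at h2
      simp at h2; exact absurd h2 h0
    · exact h1
  have hTx0 : 0 < T x0 := by
    have := h.smono hi ⟨le_rfl, h.anti i hi⟩ hxi hx0A
    rwa [h.zero i hi] at this
  set p' := ⌊(k:ℝ) * T x0⌋₊ with hp'
  have hSp' : S p' := hS x0 (hI _ le_rfl hx0q) (hfl _ le_rfl hx0q)
  have hp'1 : 1 ≤ p' := by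
    rcases Nat.eq_zero_or_pos p' with h1 | h1
    · rw [h1] at hSp'; exact absurd hSp' h0
    · exact h1
  have hp'0 : (0:ℝ) < p' := by exact_mod_cast hp'1
  have hp'le : (p':ℝ) ≤ k * T x0 := Nat.floor_le (by positivity)
  have hmem : ∀ x : ℝ, x0 ≤ x → x < (q:ℝ)/k → (p', ⌊(k:ℝ) * T x⌋₊ + 1) ∈ F := by
    intro x h1 h2
    have hxI : x ∈ Ico (b (i+1)) (b i) := ⟨by linarith, by linarith⟩
    have hm : T x0 ≤ T x := (h.smono hi).monotoneOn hxi hxI h1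
    rw [hF]
    refine ⟨?_, ?_, ?_⟩
    · have : T x < 1 := h.lt1 x (hI x h1 h2)
      have h3 : ⌊(k:ℝ) * T x⌋₊ < k := (Nat.floor_lt (by nlinarith)).2 (by nlinarith)
      omega
    · have : p' ≤ ⌊(k:ℝ) * T x⌋₊ := Nat.floor_le_floor (by nlinarith)
      omega
    · intro t ht1 ht2
      rcases Nat.eq_or_lt_of_le ht1 with h3 | h3
      · rw [← h3]; exact hSp'
      · have h4 : (k:ℝ) * T x0 < t := (Nat.floor_lt (by positivity)).1 h3
        have h5 : (t:ℝ) ≤ k * T x := by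
          have : (t:ℝ) ≤ ⌊(k:ℝ) * T x⌋₊ := by exact_mod_cast Nat.lt_succ_iff.1 ht2
          exact this.trans (Nat.floor_le (by nlinarith))
        have hiv := intermediate_value_Icc h1 (f := T) ((h.cont i hi).mono
          (fun z hz => ⟨by linarith [hz.1], by linarith [hz.2]⟩))
        obtain ⟨y, hy, hTy⟩ := hiv (show (t:ℝ)/k ∈ Icc (T x0) (T x) from
          ⟨by rw [le_div_iff₀ hk0]; linarith, by rw [div_le_iff₀ hk0]; linarith⟩)
        have h6 := hS y (hI y hy.1 (by linarith [hy.2])) (hfl y hy.1 (by linarith [hy.2]))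
        rw [hTy, mul_div_cancel₀ _ hk0.ne', Nat.floor_natCast] at h6
        exact h6
  have hlim : (q:ℝ)/k ≤ b (i+1) + (q:ℝ)/p * (x0 - b (i+1)) := by
    apply le_of_forall_lt_imp_le_of_dense
    intro x hx
    have hqp : 1 ≤ (q:ℝ)/p := by rw [le_div_iff₀ hp0]; linarith
    rcases le_total x x0 with h1 | h1
    · nlinarith
    · have h2 := hmax _ _ (hmem x h1 hx)
      rw [div_le_iff₀ hp'0] at h2
      push_cast at h2
      have h3 := Nat.lt_floor_add_one ((k:ℝ) * T x)
      have h4 := h.key hi hxi.1 h1 (by linarith)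
      have h5 : (q:ℝ)/p * p' ≤ (q:ℝ)/p * (k * T x0) := by gcongr
      have h6 : (k:ℝ) * T x ≤ k * ((q:ℝ)/p * T x0) := by
        calc _ ≤ _ := h3.le.trans (h2.trans h5)
          _ = _ := by ring
      have h7 := le_of_mul_le_mul_left h6 hk0
      have h8 : (x - b (i+1)) * T x0 ≤ ((q:ℝ)/p * (x0 - b (i+1))) * T x0 := by
        calc _ ≤ _ := h4
          _ ≤ (x0 - b (i+1)) * ((q:ℝ)/p * T x0) := by
            apply mul_le_mul_of_nonneg_left h7; linarith
          _ = _ := by ring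
      have := le_of_mul_le_mul_right h8 hTx0
      linarith
  have hA : b (i+1) = 0 := by
    have h1 : (q:ℝ)/p * x0 = (q:ℝ)/k := by rw [hx0]; field_simp
    have h2 : b (i+1) * ((q:ℝ)/p) ≤ b (i+1) := by nlinarith
    have hqp : 1 < (q:ℝ)/p := by rw [lt_div_iff₀ hp0]; linarith
    have h3 := h.b_nonneg (i := i+1) (by omega)
    nlinarith
  have hin : i = n := by
    by_contra hc
    have := h.b_pos (i := i+1) (by omega)
    linarith
  subst hin
  have hbp := h.b_pos (i := i) le_rfl
  have hb1 : b i < 1 := by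
    have := h.b_lt_one (i := i-1) (by omega)
    rwa [Nat.sub_add_cancel h.hn] at this
  have hTl : ∀ x : ℝ, x0 ≤ x → x < (q:ℝ)/k → T x = x / b i := fun x h1 h2 =>
    h.lin x ⟨by linarith, by linarith⟩
  have hp'p : (p':ℝ) ≤ p / b i := by
    rw [hTl x0 le_rfl hx0q, hx0] at hp'le
    calc _ ≤ _ := hp'le
      _ = _ := by field_simp
  obtain ⟨r, hr⟩ : ∃ r : ℕ, ⌈(q:ℝ) / b i⌉₊ = r + 1 :=
    Nat.exists_eq_succ_of_ne_zero (Nat.ceil_pos.2 (div_pos (by linarith) hbp)).ne'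
  have hr1 : (r:ℝ) < q / b i := Nat.lt_ceil.1 (by omega)
  have hr2 : (q:ℝ) / b i ≤ r + 1 := by
    have := Nat.le_ceil ((q:ℝ) / b i)
    rw [hr] at this; exact_mod_cast this
  obtain ⟨x, hx1, hx2, hx3⟩ : ∃ x, x0 ≤ x ∧ x < (q:ℝ)/k ∧ (r:ℝ) * b i / k ≤ x := by
    refine ⟨max x0 ((r:ℝ) * b i / k), le_max_left _ _, max_lt hx0q ?_, le_max_right _ _⟩
    gcongr
    rwa [lt_div_iff₀ hbp] at hr1
  have hmm := hmem x hx1 hx2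
  have hrx : r ≤ ⌊(k:ℝ) * T x⌋₊ := by
    apply Nat.le_floor
    rw [hTl x hx1 hx2]
    rw [div_le_iff₀ hk0] at hx3
    rw [← mul_div_assoc, le_div_iff₀ hbp]; linarith
  have hqx : (q:ℝ) / b i ≤ ((⌊(k:ℝ) * T x⌋₊ + 1 : ℕ) : ℝ) := by
    have : (r:ℝ) ≤ ⌊(k:ℝ) * T x⌋₊ := by exact_mod_cast hrx
    push_cast; linarith
  have hle : (q:ℝ) / p ≤ ((⌊(k:ℝ) * T x⌋₊ + 1 : ℕ) : ℝ) / p' := by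
    rw [le_div_iff₀ hp'0]
    calc (q:ℝ) / p * p' ≤ (q:ℝ) / p * (p / b i) := by gcongr
      _ = q / b i := by field_simp
      _ ≤ _ := hqx
  have hf1 := hmax2 _ _ hmm hle
  have hf2 := hmax _ _ hmm
  have hf1' : (p':ℝ) ≤ p := by exact_mod_cast hf1
  rw [div_le_iff₀ hp'0] at hf2
  have hf3 : (q:ℝ) / b i ≤ q := by
    calc _ ≤ _ := hqx.trans hf2
      _ ≤ (q:ℝ)/p * p := by gcongr
      _ = q := by field_simp
  rw [div_le_iff₀ hbp] at hf3
  nlinarith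

end Br

theorem mem_Jint {k i : ℕ} (hk : 1 ≤ k) (x : ℝ) : x ∈ Jint k i ↔ 0 ≤ x ∧ ⌊(k:ℝ) * x⌋₊ = i := by
  have hk0 : (0:ℝ) < k := by exact_mod_cast hk
  unfold Jint
  rw [mem_Ico, div_le_iff₀ hk0, lt_div_iff₀ hk0]
  constructor
  · rintro ⟨h1, h2⟩
    have h0 : 0 ≤ x := by
      have : (0:ℝ) ≤ i := Nat.cast_nonneg i
      by_contra hc
      push Not at hc
      nlinarith
    exact ⟨h0, (Nat.floor_eq_iff (by positivity)).2 ⟨by linarith, by linarith⟩⟩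
  · rintro ⟨h1, h2⟩
    have := (Nat.floor_eq_iff (by positivity)).1 h2
    exact ⟨by linarith [this.1], by linarith [this.2]⟩

theorem meas_Jint (k i : ℕ) : MeasurableSet (Jint k i) := measurableSet_Ico

theorem Jint_sub {k i : ℕ} (hk : 1 ≤ k) (hi : i < k) : Jint k i ⊆ Ico 0 1 := by
  have hk0 : (0:ℝ) < k := by exact_mod_cast hk
  have hi' : (i:ℝ) + 1 ≤ k := by exact_mod_cast hi
  exact Ico_subset_Ico (by positivity) ((div_le_one hk0).2 hi')

theorem vol_Jint {k : ℕ} (hk : 1 ≤ k) (i : ℕ) : volume.real (Jint k i) = 1 / k := by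
  have hk0 : (0:ℝ) < k := by exact_mod_cast hk
  unfold Jint
  rw [Real.volume_real_Ico_of_le (by gcongr; linarith)]
  field_simp; ring

/-- partition of an integral along the level cells of `φ`. -/
theorem part_cells {k : ℕ} (hk : 1 ≤ k) (φ g : ℝ → ℝ) (D : Set ℝ)
    (hm : ∀ C, MeasurableSet C → MeasurableSet (D ∩ φ ⁻¹' C)) (hg : IntegrableOn g D) (m : ℕ) :
    ∫ x in D ∩ φ ⁻¹' (Ico 0 ((m:ℝ)/k)), g x = ∑ l ∈ Finset.range m, ∫ x in D ∩ φ ⁻¹' (Jint k l), g x := by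
  have hk0 : (0:ℝ) < k := by exact_mod_cast hk
  induction m with
  | zero => simp
  | succ m ih =>
    have hu : D ∩ φ ⁻¹' (Ico 0 (((m+1:ℕ):ℝ)/k)) =
        (D ∩ φ ⁻¹' (Ico 0 ((m:ℝ)/k))) ∪ (D ∩ φ ⁻¹' (Jint k m)) := by
      rw [← inter_union_distrib_left, ← preimage_union]
      congr 2
      unfold Jint
      rw [Ico_union_Ico_eq_Ico (by positivity) (by gcongr; linarith)]
      push_cast; rfl
    rw [hu, setIntegral_union _ (hm _ (meas_Jint k m)) (hg.mono_set inter_subset_left)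
      (hg.mono_set inter_subset_left), ih, Finset.sum_range_succ]
    rw [Set.disjoint_left]
    rintro x ⟨_, h1⟩ ⟨_, h2⟩
    simp only [mem_preimage, mem_Ico, Jint] at h1 h2
    linarith

noncomputable def stp (k : ℕ) (v : ℕ → ℝ) (x : ℝ) : ℝ := v ⌊(k:ℝ) * x⌋₊

theorem stp_eq {k i : ℕ} (hk : 1 ≤ k) (v : ℕ → ℝ) {x : ℝ} (hx : x ∈ Jint k i) : stp k v x = v i := by
  unfold stp; rw [((mem_Jint hk x).1 hx).2]

theorem stp_meas (k : ℕ) (v : ℕ → ℝ) : Measurable (stp k v) := by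
  unfold stp
  exact (measurable_from_nat (f := v)).comp (Nat.measurable_floor.comp (measurable_const.mul measurable_id))

theorem floor_lt_k {k : ℕ} (hk : 1 ≤ k) {x : ℝ} (hx : x ∈ Ico (0:ℝ) 1) : ⌊(k:ℝ) * x⌋₊ < k := by
  have hk0 : (0:ℝ) < k := by exact_mod_cast hk
  exact (Nat.floor_lt (mul_nonneg hk0.le hx.1)).2 (by nlinarith [hx.2])

theorem stp_int {k : ℕ} (hk : 1 ≤ k) (v : ℕ → ℝ) : IntegrableOn (stp k v) (Ico 0 1) := by
  refine Measure.integrableOn_of_bounded (M := ∑ i ∈ Finset.range k, |v i|) (by simp)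
    (stp_meas k v).aestronglyMeasurable ?_
  refine (ae_restrict_iff' measurableSet_Ico).2 (Eventually.of_forall fun x hx => ?_)
  exact Finset.single_le_sum (f := fun i => |v i|) (fun i _ => abs_nonneg _)
    (Finset.mem_range.2 (floor_lt_k hk hx))

theorem stp_anti {k : ℕ} {v : ℕ → ℝ} (hv : Antitone v) : Antitone (stp k v) := by
  intro x y hxy
  exact hv (Nat.floor_le_floor (by gcongr))

namespace Br
variable {T : ℝ → ℝ} {b e : ℕ → ℝ} {n : ℕ}

theorem meas_br (h : Br T b e n) {i : ℕ} (hi : i ≤ n) {C : Set ℝ} (hC : MeasurableSet C) :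
    MeasurableSet (Ico (b (i+1)) (b i) ∩ T ⁻¹' C) := by
  have h1 := (h.cont i hi).measurable_piecewise (g := fun _ => 0) continuousOn_const measurableSet_Ico
  have : Ico (b (i+1)) (b i) ∩ T ⁻¹' C = Ico (b (i+1)) (b i) ∩
      ((Ico (b (i+1)) (b i)).piecewise T (fun _ => 0)) ⁻¹' C := by
    ext x
    simp only [mem_inter_iff, mem_preimage]
    refine and_congr_right fun hx => ?_
    rw [piecewise_eq_of_mem _ _ _ hx]
  rw [this]
  exact measurableSet_Ico.inter (h1 hC)

theorem meas (h : Br T b e n) {C : Set ℝ} (hC : MeasurableSet C) :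
    MeasurableSet (Ico 0 1 ∩ T ⁻¹' C) := by
  have : Ico 0 1 ∩ T ⁻¹' C = ⋃ i ∈ Finset.range (n+1), Ico (b (i+1)) (b i) ∩ T ⁻¹' C := by
    ext x
    simp only [mem_iUnion, exists_prop, Finset.mem_range]
    constructor
    · rintro ⟨h1, h2⟩
      obtain ⟨i, hi, h3⟩ := h.cell h1
      exact ⟨i, by omega, h3, h2⟩
    · rintro ⟨i, hi, h1, h2⟩
      exact ⟨h.sub (by omega) h1, h2⟩
  rw [this]
  exact Finset.measurableSet_biUnion _ fun i hi => h.meas_br (by simp at hi; omega) hC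

theorem meas_sub (h : Br T b e n) {D : Set ℝ} (hD : MeasurableSet D) (hs : D ⊆ Ico 0 1)
    {C : Set ℝ} (hC : MeasurableSet C) : MeasurableSet (D ∩ T ⁻¹' C) := by
  have : D ∩ T ⁻¹' C = D ∩ (Ico 0 1 ∩ T ⁻¹' C) := by
    rw [← inter_assoc, inter_eq_self_of_subset_left hs]
  rw [this]; exact hD.inter (h.meas hC)

theorem part_br_aux (h : Br T b e n) {g : ℝ → ℝ} (hg : IntegrableOn g (Ico 0 1)) {C : Set ℝ}
    (hC : MeasurableSet C) (m : ℕ) (hm : m ≤ n + 1) :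
    ∫ x in Ico (b m) 1 ∩ T ⁻¹' C, g x =
      ∑ i ∈ Finset.range m, ∫ x in Ico (b (i+1)) (b i) ∩ T ⁻¹' C, g x := by
  induction m with
  | zero => simp [h.b0]
  | succ m ih =>
    have hs : Ico (b m) 1 ⊆ Ico 0 1 := Ico_subset_Ico_left (h.b_nonneg (by omega))
    have hu : Ico (b (m+1)) 1 ∩ T ⁻¹' C =
        (Ico (b m) 1 ∩ T ⁻¹' C) ∪ (Ico (b (m+1)) (b m) ∩ T ⁻¹' C) := by
      rw [← union_inter_distrib_right, union_comm, Ico_union_Ico_eq_Ico (h.anti m (by omega)).le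
        (h.b_le_one (by omega))]
    rw [hu, setIntegral_union _ (h.meas_br (by omega) hC) (hg.mono_set (inter_subset_left.trans hs))
      (hg.mono_set (inter_subset_left.trans (h.sub (by omega)))), ih (by omega), Finset.sum_range_succ]
    rw [Set.disjoint_left]
    rintro x ⟨h1, _⟩ ⟨h2, _⟩
    exact absurd h1.1 (not_le.2 h2.2)

theorem part_br (h : Br T b e n) {g : ℝ → ℝ} (hg : IntegrableOn g (Ico 0 1)) {C : Set ℝ}
    (hC : MeasurableSet C) :
    ∫ x in Ico 0 1 ∩ T ⁻¹' C, g x =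
      ∑ i ∈ Finset.range (n+1), ∫ x in Ico (b (i+1)) (b i) ∩ T ⁻¹' C, g x := by
  have := h.part_br_aux hg hC (n+1) le_rfl
  rwa [h.bn] at this

/-- integrals over consecutive level cells decrease within a branch -/
theorem br_mono (h : Br T b e n) {g : ℝ → ℝ} (hg : IntegrableOn g (Ico 0 1)) (ga : Antitone g)
    (g0 : ∀ x, 0 ≤ g x) {i : ℕ} (hi : i ≤ n) {k : ℕ} (hk : 1 ≤ k) (l : ℕ) :
    ∫ x in Ico (b (i+1)) (b i) ∩ T ⁻¹' (Jint k (l+1)), g x ≤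
      ∫ x in Ico (b (i+1)) (b i) ∩ T ⁻¹' (Jint k l), g x := by
  have hk0 : (0:ℝ) < k := by exact_mod_cast hk
  set A := b (i+1) with hA
  set B := b i with hB
  have hAB : A < B := h.anti i hi
  by_cases hne : (Ico A B ∩ T ⁻¹' (Jint k (l+1))).Nonempty
  · obtain ⟨c, hc, hTc⟩ := hne
    have hTc1 : ((l:ℝ) + 1)/k ≤ T c := by
      have := hTc.1; push_cast at this; exact this
    have hl1 : (l:ℝ)/k < ((l:ℝ)+1)/k := by gcongr; linarith
    have hl0 : (0:ℝ) ≤ (l:ℝ)/k := by positivity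
    have hiv := intermediate_value_Icc hc.1 (f := T) ((h.cont i hi).mono
          (fun z hz => ⟨hz.1, lt_of_le_of_lt hz.2 hc.2⟩))
    rw [h.zero i hi] at hiv
    obtain ⟨y, hy, hTy⟩ := hiv (show (l:ℝ)/k ∈ _ from ⟨hl0, by linarith⟩)
    obtain ⟨z, hz, hTz⟩ := hiv (show ((l:ℝ)+1)/k ∈ _ from ⟨by linarith, hTc1⟩)
    have hyI : y ∈ Ico A B := ⟨hy.1, lt_of_le_of_lt hy.2 hc.2⟩
    have hzI : z ∈ Ico A B := ⟨hz.1, lt_of_le_of_lt hz.2 hc.2⟩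
    have hsm := h.smono hi
    have hyz : y < z := (hsm.lt_iff_lt hyI hzI).1 (by rw [hTy, hTz]; exact hl1)
    have hE1 : Ico A B ∩ T ⁻¹' (Jint k l) = Ico y z := by
      ext x
      simp only [mem_inter_iff, mem_preimage, Jint, mem_Ico]
      constructor
      · rintro ⟨hx, h1, h2⟩
        rw [← hTy] at h1; rw [← hTz] at h2
        exact ⟨(hsm.le_iff_le hyI hx).1 h1, (hsm.lt_iff_lt hx hzI).1 h2⟩
      · rintro ⟨h1, h2⟩
        have hx : x ∈ Ico A B := ⟨hyI.1.trans h1, h2.trans hzI.2⟩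
        refine ⟨hx, ?_, ?_⟩
        · rw [← hTy]; exact (hsm.le_iff_le hyI hx).2 h1
        · rw [← hTz]; exact (hsm.lt_iff_lt hx hzI).2 h2
    have hE2 : Ico A B ∩ T ⁻¹' (Jint k (l+1)) ⊆ Icc z (2*z - y) := by
      rintro x ⟨hx, hx1, hx2⟩
      push_cast at hx1 hx2
      have hzx : z ≤ x := by
        rw [← hTz] at hx1; exact (hsm.le_iff_le hzI hx).1 hx1
      refine ⟨hzx, ?_⟩
      rcases eq_or_lt_of_le hzx with h3 | h3
      · linarith
      · have hs := (h.conv i hi).slope_mono_adjacent hyI hx hyz h3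
        rw [hTy, hTz] at hs
        have e1 : ((l:ℝ)+1)/k - (l:ℝ)/k = 1/k := by ring
        rw [e1] at hs
        have e2 : T x - ((l:ℝ)+1)/k ≤ 1/k := by
          have : ((l:ℝ)+1+1)/k = ((l:ℝ)+1)/k + 1/k := by ring
          linarith
        rw [div_le_div_iff₀ (by linarith) (by linarith)] at hs
        have hk1 : (0:ℝ) < 1/k := by positivity
        have : 1/(k:ℝ) * (x - z) ≤ 1/k * (z - y) := by
          refine hs.trans ?_
          apply mul_le_mul_of_nonneg_right e2; linarith
        have := le_of_mul_le_mul_left this hk1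
        linarith
    have hIc : ∀ s t, IntegrableOn (fun _ : ℝ => g z) (Icc s t) := fun s t =>
      (integrableOn_const (by simp))
    have hm2 := h.meas_br hi (meas_Jint k (l+1))
    rw [hE1]
    calc ∫ x in Ico A B ∩ T ⁻¹' (Jint k (l+1)), g x
        ≤ ∫ x in Ico A B ∩ T ⁻¹' (Jint k (l+1)), g z := by
          refine setIntegral_mono_on (hg.mono_set (inter_subset_left.trans (h.sub hi)))
            ((hIc z (2*z-y)).mono_set hE2) hm2 fun x hx => ga (hE2 hx).1
      _ ≤ ∫ x in Icc z (2*z-y), g z := by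
          refine setIntegral_mono_set (hIc _ _) (Eventually.of_forall fun x => g0 z)
            hE2.eventuallyLE
      _ = ∫ x in Ico y z, g z := by
          simp only [setIntegral_const]
          rw [Real.volume_real_Icc_of_le (by linarith), Real.volume_real_Ico_of_le hyz.le]
          congr 1; ring
      _ ≤ ∫ x in Ico y z, g x := by
          refine setIntegral_mono_on ((hIc y z).mono_set Ico_subset_Icc_self)
            (hg.mono_set ?_) measurableSet_Ico fun x hx => ga hx.2.le
          rw [← hE1]; exact inter_subset_left.trans (h.sub hi)
  · rw [not_nonempty_iff_eq_empty] at hne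
    rw [hne]
    simp only [Measure.restrict_empty, integral_zero_measure]
    exact setIntegral_nonneg (h.meas_br hi (meas_Jint k l)) fun x _ => g0 x

theorem br_bound (h : Br T b e n) {g : ℝ → ℝ} (hg : IntegrableOn g (Ico 0 1)) (ga : Antitone g)
    (g0 : ∀ x, 0 ≤ g x) {i : ℕ} (hi : i ≤ n) {k : ℕ} (hk : 1 ≤ k) :
    ∫ x in Ico (b (i+1)) (b i) ∩ T ⁻¹' (Jint k 0), g x ≤ g (b (i+1)) / e i / k := by
  have hk0 : (0:ℝ) < k := by exact_mod_cast hk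
  have he := h.epos i hi
  have hp : 0 < 1 / e i / k := by positivity
  have hsub : Ico (b (i+1)) (b i) ∩ T ⁻¹' (Jint k 0) ⊆ Icc (b (i+1)) (b (i+1) + 1 / e i / k) := by
    rintro x ⟨hx, _, hx2⟩
    refine ⟨hx.1, ?_⟩
    have h1 := h.lower i hi x hx
    have h2 : e i * (x - b (i+1)) ≤ 1 / k := by
      simp only [Nat.cast_zero, zero_add] at hx2; linarith
    have h3 : x - b (i+1) ≤ 1 / k / e i := by
      rw [le_div_iff₀ he]; linarith
    have : 1 / (k:ℝ) / e i = 1 / e i / k := by field_simp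
    linarith
  have hIc : IntegrableOn (fun _ : ℝ => g (b (i+1))) (Icc (b (i+1)) (b (i+1) + 1 / e i / k)) :=
      (integrableOn_const (by simp))
  calc ∫ x in Ico (b (i+1)) (b i) ∩ T ⁻¹' (Jint k 0), g x
      ≤ ∫ x in Ico (b (i+1)) (b i) ∩ T ⁻¹' (Jint k 0), g (b (i+1)) := by
        refine setIntegral_mono_on (hg.mono_set (inter_subset_left.trans (h.sub hi)))
          (hIc.mono_set hsub) (h.meas_br hi (meas_Jint k 0)) fun x hx => ga hx.1.1
    _ ≤ ∫ x in Icc (b (i+1)) (b (i+1) + 1 / e i / k), g (b (i+1)) := by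
        refine setIntegral_mono_set hIc (Eventually.of_forall fun x => g0 _) hsub.eventuallyLE
    _ = _ := by
        rw [setIntegral_const, Real.volume_real_Icc_of_le (by linarith), smul_eq_mul]
        field_simp; ring

end Br

noncomputable def Pm (T : ℝ → ℝ) (k i l : ℕ) : ℝ := k * volume.real (Jint k i ∩ T ⁻¹' Jint k l)

noncomputable def Mop (T : ℝ → ℝ) (k : ℕ) (v : ℕ → ℝ) (l : ℕ) : ℝ :=
  k * ∫ x in Ico 0 1 ∩ T ⁻¹' Jint k l, stp k v x

theorem Pm_nonneg (T : ℝ → ℝ) (k i l : ℕ) : 0 ≤ Pm T k i l := by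
  unfold Pm; positivity

/-- Markov-Kakutani for one affine map, in sequence space -/
theorem exists_fixed_aux (L : (ℕ → ℝ) →ₗ[ℝ] (ℕ → ℝ)) (hL : Continuous L) (K : Set (ℕ → ℝ)) (R : ℝ)
    (hKb : ∀ v ∈ K, ∀ i, v i ∈ Icc 0 R) (hKc : IsClosed K) (hKv : Convex ℝ K)
    (hLK : ∀ v ∈ K, L v ∈ K) (u : ℕ → ℝ) (hu : u ∈ K) : ∃ v ∈ K, L v = v := by
  have hcpt : IsCompact K := by
    refine IsCompact.of_isClosed_subset (isCompact_univ_pi (fun _ : ℕ => isCompact_Icc (a := (0:ℝ)) (b := R)))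
      hKc ?_
    intro v hv i _
    exact hKb v hv i
  have hit : ∀ m, (L ^ m) u ∈ K := by
    intro m
    induction m with
    | zero => simpa using hu
    | succ m ih => rw [pow_succ']; exact hLK _ ih
  let c : ℕ → (ℕ → ℝ) := fun m => ∑ j ∈ Finset.range (m+1), (1/((m:ℝ)+1)) • (L ^ j) u
  have hc : ∀ m, c m ∈ K := by
    intro m
    refine hKv.sum_mem (fun j _ => by positivity) ?_ (fun j _ => hit j)
    simp; field_simp
  obtain ⟨v, hv, φ, hφ, hlim⟩ := hcpt.tendsto_subseq hc
  refine ⟨v, hv, ?_⟩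
  have hdiff : ∀ m, L (c m) - c m = (1/((m:ℝ)+1)) • ((L ^ (m+1)) u - u) := by
    intro m
    simp only [c, ← Finset.smul_sum]
    rw [map_smul, map_sum, ← smul_sub, ← Finset.sum_sub_distrib]
    congr 1
    have : ∀ j, L ((L ^ j) u) - (L ^ j) u = (L ^ (j+1)) u - (L ^ j) u := by
      intro j; rw [pow_succ']; rfl
    simp only [this]
    rw [Finset.sum_range_sub (fun j => (L ^ j) u)]
    simp
  have h1 : Tendsto (fun m => L (c (φ m)) - c (φ m)) atTop (nhds (L v - v)) :=
    ((hL.tendsto v).comp hlim).sub hlim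
  have h2 : Tendsto (fun m => L (c m) - c m) atTop (nhds 0) := by
    rw [tendsto_pi_nhds]
    intro i
    simp only [hdiff]
    refine squeeze_zero_norm (a := fun m : ℕ => (1/((m:ℝ)+1)) * R) ?_ ?_
    · intro m
      have ha := hKb _ (hit (m+1)) i
      have hb := hKb _ hu i
      simp only [Pi.smul_apply, Pi.sub_apply, smul_eq_mul, Real.norm_eq_abs]
      rw [abs_mul, abs_of_pos (by positivity : (0:ℝ) < 1/((m:ℝ)+1))]
      gcongr
      rw [abs_le]; constructor <;> linarith [ha.1, ha.2, hb.1, hb.2]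
    · have := tendsto_one_div_add_atTop_nhds_zero_nat (𝕜 := ℝ)
      simpa using this.mul_const R
  have := tendsto_nhds_unique h1 (h2.comp hφ.tendsto_atTop)
  exact sub_eq_zero.1 this

theorem fixed_unique {k : ℕ} (P : ℕ → ℕ → ℝ) (hP : ∀ i l, 0 ≤ P i l)
    (hrow : ∀ i < k, ∑ l ∈ Finset.range k, P i l = 1)
    (H : ∀ v : ℕ → ℝ, (∀ i, 0 ≤ v i) → (∀ l < k, v l = ∑ i ∈ Finset.range k, v i * P i l) →
      v 0 = 0 → ∀ i < k, v i = 0)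
    (f h : ℕ → ℝ) (hf : ∀ l < k, f l = ∑ i ∈ Finset.range k, f i * P i l)
    (hh : ∀ l < k, h l = ∑ i ∈ Finset.range k, h i * P i l)
    (hs : ∑ i ∈ Finset.range k, f i = ∑ i ∈ Finset.range k, h i) : ∀ i < k, f i = h i := by
  set u : ℕ → ℝ := fun i => f i - h i with hu
  have hu1 : ∀ l < k, u l = ∑ i ∈ Finset.range k, u i * P i l := by
    intro l hl
    simp only [hu, sub_mul, Finset.sum_sub_distrib]
    rw [← hf l hl, ← hh l hl]
  have hu0 : ∑ i ∈ Finset.range k, u i = 0 := by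
    simp only [hu, Finset.sum_sub_distrib]; linarith
  have hle : ∀ l ∈ Finset.range k, |u l| ≤ ∑ i ∈ Finset.range k, |u i| * P i l := by
    intro l hl
    rw [hu1 l (Finset.mem_range.1 hl)]
    refine (Finset.abs_sum_le_sum_abs _ _).trans (le_of_eq ?_)
    refine Finset.sum_congr rfl fun i _ => ?_
    rw [abs_mul, abs_of_nonneg (hP i l)]
  have hsum : ∑ l ∈ Finset.range k, |u l| = ∑ l ∈ Finset.range k, ∑ i ∈ Finset.range k, |u i| * P i l := by
    rw [Finset.sum_comm]
    refine Finset.sum_congr rfl fun i hi => ?_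
    rw [← Finset.mul_sum, hrow i (Finset.mem_range.1 hi), mul_one]
  have habs : ∀ l < k, |u l| = ∑ i ∈ Finset.range k, |u i| * P i l := fun l hl =>
    (Finset.sum_eq_sum_iff_of_le hle).1 hsum l (Finset.mem_range.2 hl)
  have key : ∀ s : ℝ, (s = 1 ∨ s = -1) → |u 0| + s * u 0 = 0 → ∀ i < k, |u i| + s * u i = 0 := by
    intro s hs h0
    refine H (fun i => |u i| + s * u i) ?_ ?_ h0
    · intro i
      rcases hs with rfl | rfl
      · linarith [neg_abs_le (u i)]
      · linarith [le_abs_self (u i)]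
    · intro l hl
      simp only [add_mul, Finset.sum_add_distrib, mul_assoc, ← Finset.mul_sum]
      rw [← hu1 l hl, ← habs l hl]
  have fin : ∀ s : ℝ, (s = 1 ∨ s = -1) → |u 0| + s * u 0 = 0 → ∀ i < k, f i = h i := by
    intro s hs h0
    have h1 := key s hs h0
    have h2 : ∑ i ∈ Finset.range k, |u i| = 0 := by
      have : ∑ i ∈ Finset.range k, (|u i| + s * u i) = 0 :=
        Finset.sum_eq_zero fun i hi => h1 i (Finset.mem_range.1 hi)
      rw [Finset.sum_add_distrib, ← Finset.mul_sum, hu0] at this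
      linarith
    intro i hi
    have h3 := (Finset.sum_eq_zero_iff_of_nonneg (fun i _ => abs_nonneg (u i))).1 h2 i (Finset.mem_range.2 hi)
    exact sub_eq_zero.1 (abs_eq_zero.1 h3)
  rcases le_total 0 (u 0) with h0 | h0
  · exact fin (-1) (Or.inr rfl) (by rw [abs_of_nonneg h0]; ring)
  · exact fin 1 (Or.inl rfl) (by rw [abs_of_nonpos h0]; ring)

theorem int_stp_cell {k : ℕ} (hk : 1 ≤ k) (v : ℕ → ℝ) {i : ℕ} (hi : i < k) :
    ∫ x in Ico 0 1 ∩ id ⁻¹' Jint k i, stp k v x = v i / k := by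
  rw [preimage_id, inter_eq_self_of_subset_right (Jint_sub hk hi),
    setIntegral_congr_fun (g := fun _ => v i) (meas_Jint k i) (fun x hx => stp_eq hk v hx),
    setIntegral_const, smul_eq_mul, vol_Jint hk]
  ring

theorem int_stp {k : ℕ} (hk : 1 ≤ k) (v : ℕ → ℝ) :
    ∫ x in Ico (0:ℝ) 1, stp k v x = (∑ i ∈ Finset.range k, v i) / k := by
  have hk0 : (0:ℝ) < k := by exact_mod_cast hk
  have hp := part_cells hk id (stp k v) (Ico 0 1) (fun C hC => measurableSet_Ico.inter hC)
    (stp_int hk v) k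
  rw [div_self hk0.ne', preimage_id, inter_self] at hp
  rw [hp, Finset.sum_div]
  exact Finset.sum_congr rfl fun i hi => int_stp_cell hk v (Finset.mem_range.1 hi)

namespace Br
variable {T : ℝ → ℝ} {b e : ℕ → ℝ} {n : ℕ}

theorem Mop_eq (h : Br T b e n) {k : ℕ} (hk : 1 ≤ k) (v : ℕ → ℝ) (l : ℕ) :
    Mop T k v l = ∑ i ∈ Finset.range k, v i * Pm T k i l := by
  have hk0 : (0:ℝ) < k := by exact_mod_cast hk
  have hD : MeasurableSet (Ico 0 1 ∩ T ⁻¹' Jint k l) := h.meas (meas_Jint k l)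
  have hp := part_cells hk id (stp k v) (Ico 0 1 ∩ T ⁻¹' Jint k l)
    (fun C hC => hD.inter hC) ((stp_int hk v).mono_set inter_subset_left) k
  rw [div_self hk0.ne'] at hp
  have e1 : (Ico 0 1 ∩ T ⁻¹' Jint k l) ∩ id ⁻¹' (Ico 0 1) = Ico 0 1 ∩ T ⁻¹' Jint k l := by
    rw [preimage_id]; exact inter_eq_self_of_subset_left inter_subset_left
  rw [e1] at hp
  unfold Mop
  rw [hp, Finset.mul_sum]
  refine Finset.sum_congr rfl fun i hi => ?_
  have hs := Jint_sub hk (Finset.mem_range.1 hi)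
  have e2 : (Ico 0 1 ∩ T ⁻¹' Jint k l) ∩ id ⁻¹' (Jint k i) = Jint k i ∩ T ⁻¹' Jint k l := by
    ext x
    simp only [mem_inter_iff, mem_preimage, id]
    constructor
    · rintro ⟨⟨_, h2⟩, h3⟩; exact ⟨h3, h2⟩
    · rintro ⟨h3, h2⟩; exact ⟨⟨hs h3, h2⟩, h3⟩
  rw [e2, setIntegral_congr_fun (g := fun _ => v i) (h.meas_sub (meas_Jint k i) hs (meas_Jint k l))
    (fun x hx => stp_eq hk v hx.1), setIntegral_const, smul_eq_mul]
  unfold Pm; ring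

theorem Pm_row (h : Br T b e n) {k : ℕ} (hk : 1 ≤ k) {i : ℕ} (hi : i < k) :
    ∑ l ∈ Finset.range k, Pm T k i l = 1 := by
  have hk0 : (0:ℝ) < k := by exact_mod_cast hk
  have hs := Jint_sub hk hi
  have hfin : volume (Jint k i) ≠ ⊤ := by simp [Jint]
  have hp := part_cells hk T (fun _ => (1:ℝ)) (Jint k i)
    (fun C hC => h.meas_sub (meas_Jint k i) hs hC) (integrableOn_const hfin) k
  rw [div_self hk0.ne'] at hp
  have e1 : Jint k i ∩ T ⁻¹' (Ico 0 1) = Jint k i :=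
    inter_eq_self_of_subset_left fun x hx => ⟨h.nonneg (hs hx), h.lt1 x (hs hx)⟩
  rw [e1] at hp
  simp only [setIntegral_const, smul_eq_mul, mul_one] at hp
  unfold Pm
  rw [← Finset.mul_sum, ← hp, vol_Jint hk]
  field_simp

theorem Pm_pos (h : Br T b e n) {k : ℕ} (hk : 1 ≤ k) {i l : ℕ} (hi : i < k) {x : ℝ}
    (hx : x ∈ Jint k i) (hT : T x ∈ Jint k l) : 0 < Pm T k i l := by
  have hk0 : (0:ℝ) < k := by exact_mod_cast hk
  have hs := Jint_sub hk hi
  obtain ⟨m, hm, hxm⟩ := h.cell (hs hx)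
  have hcw : ContinuousWithinAt T (Ico (b (m+1)) (b m)) x := h.cont m hm x hxm
  have h1 : T ⁻¹' (Iio (((l:ℝ)+1)/k)) ∈ nhdsWithin x (Ico (b (m+1)) (b m)) :=
    hcw (Iio_mem_nhds hT.2)
  obtain ⟨ε, hε, hball⟩ := Metric.mem_nhdsWithin_iff.1 h1
  set y := min (x + ε) (min (b m) (((i:ℝ)+1)/k)) with hy
  have hxy : x < y := lt_min (by linarith) (lt_min hxm.2 hx.2)
  have hsub : Ico x y ⊆ Jint k i ∩ T ⁻¹' Jint k l := by
    rintro z ⟨hz1, hz2⟩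
    have hz3 : z < x + ε := hz2.trans_le (min_le_left _ _)
    have hz4 : z < b m := hz2.trans_le ((min_le_right _ _).trans (min_le_left _ _))
    have hz5 : z < ((i:ℝ)+1)/k := hz2.trans_le ((min_le_right _ _).trans (min_le_right _ _))
    have hzm : z ∈ Ico (b (m+1)) (b m) := ⟨hxm.1.trans hz1, hz4⟩
    refine ⟨⟨hx.1.trans hz1, hz5⟩, hT.1.trans ((h.smono hm).monotoneOn hxm hzm hz1), ?_⟩
    refine hball ⟨?_, hzm⟩
    rw [Metric.mem_ball, Real.dist_eq, abs_of_nonneg (by linarith)]; linarith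
  have hfin : volume (Jint k i ∩ T ⁻¹' Jint k l) ≠ ⊤ :=
    ne_top_of_le_ne_top (by simp [Jint]) (measure_mono (t := Jint k i) inter_subset_left)
  have h2 := measureReal_mono hsub hfin
  rw [Real.volume_real_Ico_of_le hxy.le] at h2
  unfold Pm
  apply mul_pos hk0; linarith

theorem Mop_supp (h : Br T b e n) {k : ℕ} (hk : 1 ≤ k) (v : ℕ → ℝ) (v0 : ∀ i, 0 ≤ v i)
    (hv : ∀ l < k, v l = ∑ i ∈ Finset.range k, v i * Pm T k i l) (h0 : v 0 = 0) :
    ∀ i < k, v i = 0 := by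
  have := h.supp hk (fun i => 0 < v i) ?_ (by simp [h0])
  · intro i hi
    exact le_antisymm (not_lt.1 (this i hi)) (v0 i)
  · intro x hx hpos
    have hT : T x ∈ Ico (0:ℝ) 1 := ⟨h.nonneg hx, h.lt1 x hx⟩
    rw [hv _ (floor_lt_k hk hT)]
    have hi := floor_lt_k hk hx
    have hP := h.Pm_pos hk hi ((mem_Jint hk x).2 ⟨hx.1, rfl⟩) ((mem_Jint hk (T x)).2 ⟨hT.1, rfl⟩)
    refine lt_of_lt_of_le (mul_pos hpos hP) ?_
    exact Finset.single_le_sum (f := fun i => v i * Pm T k i ⌊(k:ℝ) * T x⌋₊)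
      (fun i _ => mul_nonneg (v0 i) (Pm_nonneg _ _ _ _)) (Finset.mem_range.2 hi)

theorem Mop_anti (h : Br T b e n) {k : ℕ} (hk : 1 ≤ k) {v : ℕ → ℝ} (v0 : ∀ i, 0 ≤ v i)
    (hv : Antitone v) : Antitone (Mop T k v) := by
  refine antitone_nat_of_succ_le fun l => ?_
  unfold Mop
  have hg := stp_int hk v
  rw [h.part_br hg (meas_Jint k (l+1)), h.part_br hg (meas_Jint k l)]
  refine mul_le_mul_of_nonneg_left (Finset.sum_le_sum fun i hi => ?_) (Nat.cast_nonneg k)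
  exact h.br_mono hg (stp_anti hv) (fun x => v0 _) (by simp at hi; omega) hk l

theorem sum_Mop (h : Br T b e n) {k : ℕ} (hk : 1 ≤ k) (v : ℕ → ℝ) :
    ∑ l ∈ Finset.range k, Mop T k v l = ∑ i ∈ Finset.range k, v i := by
  simp only [h.Mop_eq hk]
  rw [Finset.sum_comm]
  refine Finset.sum_congr rfl fun i hi => ?_
  rw [← Finset.mul_sum, h.Pm_row hk (Finset.mem_range.1 hi), mul_one]

theorem exists_fixed (h : Br T b e n) {k : ℕ} (hk : 1 ≤ k) :
    ∃ v : ℕ → ℝ, Antitone v ∧ (∀ i, 0 ≤ v i) ∧ ∑ i ∈ Finset.range k, v i = k ∧ Mop T k v = v := by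
  let L : (ℕ → ℝ) →ₗ[ℝ] (ℕ → ℝ) :=
    { toFun := fun v l => ∑ i ∈ Finset.range k, v i * Pm T k i l
      map_add' := by
        intro v w; funext l; simp [add_mul, Finset.sum_add_distrib]
      map_smul' := by
        intro c v; funext l; simp [mul_assoc, Finset.mul_sum] }
  have hLM : ∀ v, L v = Mop T k v := fun v => funext fun l => (h.Mop_eq hk v l).symm
  have hLc : Continuous L := by
    change Continuous fun (v : ℕ → ℝ) (l : ℕ) => ∑ i ∈ Finset.range k, v i * Pm T k i l
    fun_prop
  let K : Set (ℕ → ℝ) := {v | Antitone v ∧ (∀ i, 0 ≤ v i) ∧ ∑ i ∈ Finset.range k, v i = k}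
  suffices hex : ∃ v ∈ K, L v = v by
    obtain ⟨v, hv, hfix⟩ := hex
    exact ⟨v, hv.1, hv.2.1, hv.2.2, (hLM v).symm.trans hfix⟩
  refine exists_fixed_aux L hLc K k ?_ ?_ ?_ ?_ (fun i => if i < k then 1 else 0) ?_
  · rintro v ⟨h1, h2, h3⟩ i
    refine ⟨h2 i, (h1 (Nat.zero_le i)).trans ?_⟩
    rw [← h3]
    exact Finset.single_le_sum (f := v) (fun i _ => h2 i) (Finset.mem_range.2 hk)
  · have e1 : K = (⋂ i, {v : ℕ → ℝ | v (i+1) ≤ v i}) ∩ ((⋂ i, {v : ℕ → ℝ | 0 ≤ v i}) ∩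
        {v | ∑ i ∈ Finset.range k, v i = k}) := by
      ext v
      simp only [K, mem_ofPred_eq, mem_inter_iff, mem_iInter]
      constructor
      · rintro ⟨h1, h2, h3⟩; exact ⟨fun i => h1 (Nat.le_succ i), h2, h3⟩
      · rintro ⟨h1, h2, h3⟩; exact ⟨antitone_nat_of_succ_le h1, h2, h3⟩
    rw [e1]
    refine (isClosed_iInter fun i => isClosed_le (by fun_prop) (by fun_prop)).inter
      ((isClosed_iInter fun i => isClosed_le (by fun_prop) (by fun_prop)).inter
        (isClosed_eq (by fun_prop) (by fun_prop)))
  · rintro v ⟨h1, h2, h3⟩ w ⟨g1, g2, g3⟩ s t hs ht hst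
    refine ⟨fun i j hij => ?_, fun i => ?_, ?_⟩
    · simp only [Pi.add_apply, Pi.smul_apply, smul_eq_mul]
      have := h1 hij; have := g1 hij
      gcongr
    · simp only [Pi.add_apply, Pi.smul_apply, smul_eq_mul]
      have := h2 i; have := g2 i
      positivity
    · simp only [Pi.add_apply, Pi.smul_apply, smul_eq_mul, Finset.sum_add_distrib, ← Finset.mul_sum]
      rw [h3, g3, ← add_mul, hst, one_mul]
  · rintro v ⟨h1, h2, h3⟩
    refine ⟨by rw [hLM]; exact h.Mop_anti hk h2 h1, fun i => ?_, ?_⟩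
    · rw [hLM, h.Mop_eq hk]
      exact Finset.sum_nonneg fun j _ => mul_nonneg (h2 j) (Pm_nonneg _ _ _ _)
    · rw [hLM, h.sum_Mop hk, h3]
  · refine ⟨fun i j hij => ?_, fun i => ?_, ?_⟩
    · dsimp only
      split_ifs <;> first | omega | norm_num
    · dsimp only
      split_ifs <;> norm_num
    · rw [Finset.sum_congr rfl (g := fun _ => (1:ℝ)) (fun i hi => by simp [Finset.mem_range.1 hi])]
      simp

/-- any normalized nonnegative fixed vector is antitone on the cells and satisfies the bound -/
theorem fixed_bound (h : Br T b e n) {k : ℕ} (hk : 1 ≤ k) (f : ℕ → ℝ)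
    (hf : ∀ l < k, f l = Mop T k f l) (hs : ∑ i ∈ Finset.range k, f i = k)
    {N : ℕ} (hN : N ≤ n) (hlt : ∑ i ∈ Finset.Ico N (n+1), 1 / e i < 1) :
    ∀ l < k, f l ≤ (∑ i ∈ Finset.range N, 1 / (b (i+1) * e i)) /
      (1 - ∑ i ∈ Finset.Ico N (n+1), 1 / e i) := by
  have hk0 : (0:ℝ) < k := by exact_mod_cast hk
  obtain ⟨v, hva, hv0, hvs, hvM⟩ := h.exists_fixed hk
  have hfv : ∀ i < k, f i = v i := by
    refine fixed_unique (Pm T k) (Pm_nonneg T k) (fun i hi => h.Pm_row hk hi)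
      (fun w w0 hw hw0 => h.Mop_supp hk w w0 hw hw0) f v ?_ ?_ (by rw [hs, hvs])
    · intro l hl; rw [← h.Mop_eq hk]; exact hf l hl
    · intro l hl; rw [← h.Mop_eq hk, hvM]
  intro l hl
  rw [hfv l hl]
  refine (hva (Nat.zero_le l)).trans ?_
  rw [le_div_iff₀ (by linarith)]
  have hg := stp_int hk v
  have hga : Antitone (stp k v) := stp_anti hva
  have hg0 : ∀ x, 0 ≤ stp k v x := fun x => hv0 _
  have h1 : v 0 ≤ ∑ i ∈ Finset.range (n+1), stp k v (b (i+1)) / e i := by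
    conv_lhs => rw [← hvM]
    unfold Mop
    rw [h.part_br hg (meas_Jint k 0), Finset.mul_sum]
    refine Finset.sum_le_sum fun i hi => ?_
    have := h.br_bound hg hga hg0 (i := i) (by simp at hi; omega) hk
    rw [le_div_iff₀ hk0] at this; linarith
  have hint : ∫ x in Ico (0:ℝ) 1, stp k v x = 1 := by
    rw [int_stp hk, hvs, div_self hk0.ne']
  have h2 : ∀ x ∈ Ioo (0:ℝ) 1, stp k v x ≤ 1 / x := by
    intro x hx
    rw [le_div_iff₀ hx.1]
    calc stp k v x * x = ∫ y in Ico 0 x, stp k v x := by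
          rw [setIntegral_const, Real.volume_real_Ico_of_le hx.1.le, smul_eq_mul]; ring
      _ ≤ ∫ y in Ico 0 x, stp k v y := by
          refine setIntegral_mono_on (integrableOn_const (by simp))
            (hg.mono_set (Ico_subset_Ico_right hx.2.le)) measurableSet_Ico fun y hy => hga hy.2.le
      _ ≤ ∫ y in Ico 0 1, stp k v y := 
          setIntegral_mono_set hg (Eventually.of_forall hg0)
            (Ico_subset_Ico_right hx.2.le).eventuallyLE
      _ = 1 := hint
  rw [← Finset.sum_range_add_sum_Ico _ (show N ≤ n + 1 by omega)] at h1
  have h3 : ∑ i ∈ Finset.range N, stp k v (b (i+1)) / e i ≤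
      ∑ i ∈ Finset.range N, 1 / (b (i+1) * e i) := by
    refine Finset.sum_le_sum fun i hi => ?_
    have hi' : i < N := Finset.mem_range.1 hi
    have he := h.epos i (by omega)
    rw [← div_div]
    gcongr
    exact h2 _ ⟨h.b_pos (by omega), h.b_lt_one (by omega)⟩
  have h4 : ∑ i ∈ Finset.Ico N (n+1), stp k v (b (i+1)) / e i ≤
      v 0 * ∑ i ∈ Finset.Ico N (n+1), 1 / e i := by
    rw [Finset.mul_sum]
    refine Finset.sum_le_sum fun i hi => ?_
    have hi' := Finset.mem_Ico.1 hi
    have he := h.epos i (by omega)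
    rw [mul_one_div]
    gcongr
    exact hva (Nat.zero_le _)
  linarith

end Br

theorem PCApprox.toBr {τ : ℝ → ℝ} {a d : ℕ → ℝ} {N : ℕ} (hτ : PCApprox τ a d N) {n : ℕ}
    (hn : N ≤ n) : Br (tauN τ a n) (fun j => if j ≤ n then a j else 0)
      (fun i => if i < n then d (i+1) else 1 / a n) n := by
  have hpos : ∀ m, 0 < a m := by
    intro m
    have h1 : 0 ≤ a (m+1) := hτ.a_anti.antitone.le_of_tendsto hτ.a_lim (m+1)
    exact lt_of_le_of_lt h1 (hτ.a_anti (Nat.lt_succ_self m))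
  have hle1 : ∀ m, a m ≤ 1 := fun m => by
    rw [← hτ.a_zero]; exact hτ.a_anti.antitone (Nat.zero_le m)
  have hT1 : ∀ i < n, ∀ x ∈ Ico (a (i+1)) (a i), tauN τ a n x = τ x := by
    intro i hi x hx
    have : a n ≤ a (i+1) := hτ.a_anti.antitone hi
    unfold tauN
    rw [if_neg (not_lt.2 (this.trans hx.1))]
  have hT2 : ∀ x ∈ Ico 0 (a n), tauN τ a n x = x / a n := by
    intro x hx
    unfold tauN
    rw [if_pos hx.2]
  have hb1 : ∀ i < n, (if i + 1 ≤ n then a (i+1) else 0) = a (i+1) := fun i hi => if_pos hi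
  have hb0 : ∀ i ≤ n, (if i ≤ n then a i else 0) = a i := fun i hi => if_pos hi
  have hbn : (if n + 1 ≤ n then a (n+1) else 0) = 0 := if_neg (by omega)
  have hlow : ∀ i, ∀ x ∈ Ico (a (i+1)) (a i), d (i+1) * (x - a (i+1)) ≤ τ x := by
    intro i x hx
    rcases eq_or_lt_of_le hx.1 with h1 | h1
    · rw [← h1, hτ.map_a]; simp
    · have h2 := (hτ.conv i).le_slope_of_hasDerivWithinAt_Ioi
        (show a (i+1) ∈ Ico (a (i+1)) (a i) from ⟨le_rfl, hτ.a_anti (Nat.lt_succ_self i)⟩) hx h1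
        ((hτ.deriv_a i).mono Ioi_subset_Ici_self)
      rw [slope_def_field, hτ.map_a, le_div_iff₀ (by linarith)] at h2
      linarith
  have hcases : ∀ i ≤ n, i < n ∨ i = n := fun i hi => Nat.lt_or_eq_of_le hi
  refine ⟨hτ.N_pos.trans hn, ?_, hbn, ?_, ?_, ?_, ?_, ?_, ?_, ?_, ?_⟩
  · simpa using hτ.a_zero
  · intro i hi
    rw [hb0 i hi]
    rcases hcases i hi with h | rfl
    · rw [hb1 i h]; exact hτ.a_anti (Nat.lt_succ_self i)
    · rw [hbn]; exact hpos _
  · intro i hi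
    rw [hb0 i hi]
    rcases hcases i hi with h | rfl
    · rw [hb1 i h]; exact (hτ.cont i).congr (hT1 i h)
    · rw [hbn]; exact (continuous_id.div_const (a i)).continuousOn.congr hT2
  · intro i hi
    rw [hb0 i hi]
    rcases hcases i hi with h | rfl
    · rw [hb1 i h]; exact (hτ.conv i).congr (fun x hx => (hT1 i h x hx).symm)
    · rw [hbn]
      refine ConvexOn.congr (f := fun x => x / a i) ?_ (fun x hx => (hT2 x hx).symm)
      refine ⟨convex_Ico _ _, fun x _ y _ s t _ _ _ => le_of_eq ?_⟩
      simp only [smul_eq_mul]; ring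
  · intro i hi
    rcases hcases i hi with h | rfl
    · rw [hb1 i h, hT1 i h _ ⟨le_rfl, hτ.a_anti (Nat.lt_succ_self i)⟩]; exact hτ.map_a i
    · rw [hbn, hT2 0 ⟨le_rfl, hpos _⟩, zero_div]
  · intro i hi
    rw [hb0 i hi]
    rcases hcases i hi with h | rfl
    · rw [hb1 i h, if_pos h]
      intro x hx
      rw [hT1 i h x hx]; exact hlow i x hx
    · rw [hbn]
      intro x hx
      rw [hT2 x hx, if_neg (lt_irrefl _)]
      apply le_of_eq; ring
  · intro i hi
    rcases hcases i hi with h | rfl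
    · simp only [if_pos h]; exact hτ.d_pos i
    · simp only [lt_irrefl, if_false]; exact one_div_pos.2 (hpos _)
  · intro x hx
    unfold tauN
    split_ifs with hxa
    · rw [div_lt_one (hpos n)]; exact hxa
    · push Not at hxa
      have hex : ∀ m, a m ≤ x → ∃ i, x ∈ Ico (a (i+1)) (a i) := by
        intro m
        induction m with
        | zero => intro h; rw [hτ.a_zero] at h; linarith [hx.2]
        | succ m ih =>
          intro h
          by_cases h2 : a m ≤ x
          · exact ih h2
          · exact ⟨m, h, not_le.1 h2⟩
      obtain ⟨i, hi⟩ := hex n hxa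
      by_contra hc
      push Not at hc
      have hxA : a (i+1) < x := by
        rcases eq_or_lt_of_le hi.1 with h1 | h1
        · rw [← h1, hτ.map_a] at hc; linarith
        · exact h1
      obtain ⟨y, hy1, hy2⟩ := exists_between hi.2
      have hs := (hτ.conv i).slope_mono_adjacent
        (show a (i+1) ∈ Ico (a (i+1)) (a i) from ⟨le_rfl, hτ.a_anti (Nat.lt_succ_self i)⟩)
        (show y ∈ Ico (a (i+1)) (a i) from ⟨by linarith, hy2⟩) hxA hy1
      have hy3 := (hτ.mapsTo (show y ∈ Icc (0:ℝ) 1 from ⟨by linarith [hx.1], by linarith [hle1 i]⟩)).2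
      rw [hτ.map_a] at hs
      have h1 : (τ y - τ x) / (y - x) ≤ 0 := div_nonpos_of_nonpos_of_nonneg (by linarith) (by linarith)
      have h2 : 0 < (τ x - 0) / (x - a (i+1)) := div_pos (by linarith) (by linarith)
      linarith
  · rw [hb0 n le_rfl]; exact hT2

theorem lam_eq : lam = volume.restrict (Ico 0 1) := by
  unfold lam
  exact Measure.restrict_congr_set Ico_ae_eq_Icc.symm

theorem lam_restrict (S : Set ℝ) : lam.restrict S = volume.restrict (Ico 0 1 ∩ S) := by
  rw [lam_eq, Measure.restrict_restrict' measurableSet_Ico, inter_comm]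

theorem ulam_vec {T : ℝ → ℝ} {b e : ℕ → ℝ} {n : ℕ} (h : Br T b e n) {k : ℕ} (hk : 1 ≤ k)
    {F : ℝ → ℝ} (hF : IsUlamFixed T k F) : ∃ v : ℕ → ℝ, (∀ x ∈ Ico (0:ℝ) 1, F x = stp k v x) ∧
      (∀ i < k, 0 ≤ v i) ∧ ∑ i ∈ Finset.range k, v i = k ∧ ∀ l < k, v l = Mop T k v l := by
  have hk0 : (0:ℝ) < k := by exact_mod_cast hk
  obtain ⟨_, hconst, hnn, hint, g, hgi, hgA, hQ⟩ := hF
  have hmid : ∀ i : ℕ, (i:ℝ)/k ∈ Jint k i := fun i => ⟨le_rfl, by gcongr; linarith⟩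
  have hst : ∀ x ∈ Ico (0:ℝ) 1, F x = stp k (fun i => F ((i:ℝ)/k)) x := by
    intro x hx
    have hi := floor_lt_k hk hx
    exact hconst _ hi x ((mem_Jint hk x).2 ⟨hx.1, rfl⟩) _ (hmid _)
  refine ⟨fun i => F ((i:ℝ)/k), hst, ?_, ?_, ?_⟩
  · intro i hi
    have := Jint_sub hk hi (hmid i)
    exact hnn _ ⟨this.1, this.2.le⟩
  · rw [lam_eq, setIntegral_congr_fun measurableSet_Ico hst, int_stp hk, div_eq_one_iff_eq hk0.ne'] at hint
    exact hint
  · intro l hl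
    have hsub := Jint_sub hk hl
    have h1 : F ((l:ℝ)/k) = k * ∫ y in Jint k l, g y ∂lam := by
      have hne : ∃ x ∈ Jint k l, Qk k g x = F x := by
        by_contra hc
        push Not at hc
        have h0 : lam (Jint k l) = 0 := measure_mono_null (fun x hx => hc x hx) (ae_iff.1 hQ)
        rw [lam_eq, Measure.restrict_apply (meas_Jint k l), inter_eq_self_of_subset_left hsub] at h0
        have h2 := vol_Jint hk l
        rw [measureReal_def, h0] at h2
        have : (0:ℝ) < 1 / k := by positivity
        simp only [ENNReal.toReal_zero] at h2
        linarith
      obtain ⟨x, hx, hxe⟩ := hne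
      rw [hconst l hl _ (hmid l) x hx, ← hxe]
      unfold Qk
      rw [Finset.sum_eq_single l]
      · rw [indicator_of_mem hx]
      · intro j _ hj
        apply indicator_of_notMem
        intro hxj
        exact hj (((mem_Jint hk x).1 hxj).2.symm.trans ((mem_Jint hk x).1 hx).2)
      · intro hl'; exact absurd (Finset.mem_range.2 hl) hl'
    simp only
    rw [h1, hgA _ (meas_Jint k l) (hsub.trans Ico_subset_Icc_self), lam_restrict]
    unfold Mop
    rw [setIntegral_congr_fun (h.meas (meas_Jint k l)) (fun x hx => hst x hx.1)]

theorem sandwich {k : ℕ} (hk : 1 ≤ k) (φ : ℝ → ℝ) (v : ℕ → ℝ) (v0 : ∀ i < k, 0 ≤ v i)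
    (hm : ∀ C, MeasurableSet C → MeasurableSet (Ico 0 1 ∩ φ ⁻¹' C))
    (hφ : ∀ x ∈ Ico (0:ℝ) 1, 0 ≤ φ x)
    (hv : ∀ l < k, ∫ x in Ico 0 1 ∩ φ ⁻¹' Jint k l, stp k v x = v l / k)
    {c : ℝ} (hc : c ∈ Ico (0:ℝ) 1) :
    ∑ l ∈ Finset.range ⌊(k:ℝ) * c⌋₊, v l / k ≤ ∫ x in Ico 0 1 ∩ φ ⁻¹' Iic c, stp k v x ∧
    ∫ x in Ico 0 1 ∩ φ ⁻¹' Iic c, stp k v x ≤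
      ∑ l ∈ Finset.range ⌊(k:ℝ) * c⌋₊, v l / k + v ⌊(k:ℝ) * c⌋₊ / k := by
  have hk0 : (0:ℝ) < k := by exact_mod_cast hk
  set i := ⌊(k:ℝ) * c⌋₊ with hi
  have hik : i < k := floor_lt_k hk hc
  have hcJ : c ∈ Jint k i := (mem_Jint hk c).2 ⟨hc.1, rfl⟩
  have hp : ∀ m ≤ k, ∑ l ∈ Finset.range m, v l / k =
      ∫ x in Ico 0 1 ∩ φ ⁻¹' (Ico 0 ((m:ℝ)/k)), stp k v x := by
    intro m hmk
    rw [part_cells hk φ (stp k v) (Ico 0 1) hm (stp_int hk v)]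
    exact Finset.sum_congr rfl fun l hl => (hv l (by have := Finset.mem_range.1 hl; omega)).symm
  have hnn : ∀ C, MeasurableSet C → 0 ≤ᵐ[volume.restrict (Ico 0 1 ∩ φ ⁻¹' C)] stp k v := by
    intro C hC
    refine (ae_restrict_iff' (hm C hC)).2 (Eventually.of_forall fun x hx => ?_)
    exact v0 _ (floor_lt_k hk hx.1)
  rw [← Finset.sum_range_succ, hp i hik.le, hp (i+1) hik]
  constructor
  · refine setIntegral_mono_set ((stp_int hk v).mono_set inter_subset_left)
      (hnn _ measurableSet_Iic) (LE.le.eventuallyLE ?_)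
    rintro x ⟨hx, h1, h2⟩
    exact ⟨hx, (h2.trans_le hcJ.1).le⟩
  · refine setIntegral_mono_set ((stp_int hk v).mono_set inter_subset_left)
      (hnn _ measurableSet_Ico) (LE.le.eventuallyLE ?_)
    rintro x ⟨hx, h1⟩
    refine ⟨hx, hφ x hx, lt_of_le_of_lt h1 ?_⟩
    push_cast; exact hcJ.2

theorem cdf_close {T : ℝ → ℝ} {b e : ℕ → ℝ} {n : ℕ} (h : Br T b e n) {k : ℕ} (hk : 1 ≤ k)
    (v : ℕ → ℝ) (v0 : ∀ i < k, 0 ≤ v i) (hM : ∀ l < k, v l = Mop T k v l) (R : ℝ)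
    (hR : ∀ i < k, v i ≤ R) {c : ℝ} (hc : c ∈ Ico (0:ℝ) 1) :
    |(∫ x in Ico 0 1 ∩ T ⁻¹' Iic c, stp k v x) - ∫ x in Ico 0 1 ∩ Iic c, stp k v x| ≤ R / k := by
  have hk0 : (0:ℝ) < k := by exact_mod_cast hk
  obtain ⟨h1, h2⟩ := sandwich hk T v v0 (fun C hC => h.meas hC) (fun x hx => h.nonneg hx)
    (fun l hl => by
      conv_rhs => rw [hM l hl]
      unfold Mop; field_simp) hc
  obtain ⟨h3, h4⟩ := sandwich hk id v v0 (fun C hC => measurableSet_Ico.inter hC) (fun x hx => hx.1)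
    (fun l hl => int_stp_cell hk v hl) hc
  rw [preimage_id] at h3 h4
  have h5 : v ⌊(k:ℝ) * c⌋₊ / k ≤ R / k := by
    gcongr; exact hR _ (floor_lt_k hk hc)
  rw [abs_le]; constructor <;> linarith

theorem br_sum_le {τ : ℝ → ℝ} {a d : ℕ → ℝ} {N : ℕ} (hτ : PCApprox τ a d N) {n : ℕ}
    (hn : N ≤ n) :
    ∑ i ∈ Finset.Ico N (n+1), 1 / (if i < n then d (i+1) else 1 / a n) ≤ a n + D₁ d N := by
  rw [Finset.sum_Ico_succ_top hn, if_neg (lt_irrefl n), one_div_one_div, add_comm]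
  have h1 : ∑ i ∈ Finset.Ico N n, 1 / (if i < n then d (i+1) else 1 / a n)
      = ∑ i ∈ Finset.range (n - N), 1 / d (i + N + 1) := by
    rw [Finset.sum_Ico_eq_sum_range]
    refine Finset.sum_congr rfl fun i hi => ?_
    have := Finset.mem_range.1 hi
    rw [if_pos (by omega), add_comm N i]
  have hs : Summable fun m => 1 / d (m + N + 1) :=
    (summable_nat_add_iff (f := fun m => 1 / d (m+1)) N).2 hτ.sum_d
  have h2 : ∑ i ∈ Finset.range (n - N), 1 / d (i + N + 1) ≤ D₁ d N :=
    hs.sum_le_tsum _ (fun i _ => (one_div_pos.2 (hτ.d_pos (i + N))).le)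
  rw [h1]
  linarith

theorem ulam_bound {τ : ℝ → ℝ} {a d : ℕ → ℝ} {N : ℕ} (hτ : PCApprox τ a d N) {n : ℕ}
    (hn : N ≤ n) (hcontr : a n + D₁ d N < 1) {k : ℕ} (hk : 1 ≤ k) (v : ℕ → ℝ)
    (hs : ∑ i ∈ Finset.range k, v i = k) (hM : ∀ l < k, v l = Mop (tauN τ a n) k v l) :
    ∀ l < k, v l ≤ Dconst a d N / (1 - (a n + D₁ d N)) := by
  intro l hl
  have hsum := br_sum_le hτ hn
  have h := (hτ.toBr hn).fixed_bound hk v hM hs hn (lt_of_le_of_lt hsum hcontr) l hl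
  have hD : ∑ i ∈ Finset.range N, 1 / ((if i + 1 ≤ n then a (i+1) else 0) *
      (if i < n then d (i+1) else 1 / a n)) = Dconst a d N := by
    refine Finset.sum_congr rfl fun i hi => ?_
    have := Finset.mem_range.1 hi
    rw [if_pos (by omega), if_pos (by omega)]
  have hpos : ∀ m, 0 ≤ a m := fun m => hτ.a_anti.antitone.le_of_tendsto hτ.a_lim m
  have hD0 : 0 ≤ Dconst a d N := by
    refine Finset.sum_nonneg fun i _ => ?_
    exact one_div_nonneg.2 (mul_nonneg (hpos _) (hτ.d_pos i).le)
  refine h.trans ?_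
  rw [hD]
  exact div_le_div_of_nonneg_left hD0 (by linarith) (by linarith)

theorem ulam_esssup {τ : ℝ → ℝ} {a d : ℕ → ℝ} {N : ℕ} (hτ : PCApprox τ a d N) {n : ℕ}
    (hn : N ≤ n) (hcontr : a n + D₁ d N < 1) {k : ℕ} (hk : 1 ≤ k) {F : ℝ → ℝ}
    (hF : IsUlamFixed (tauN τ a n) k F) :
    esssup F ≤ ENNReal.ofReal (Dconst a d N / (1 - (a n + D₁ d N))) := by
  obtain ⟨v, hv, v0, hs, hM⟩ := ulam_vec (hτ.toBr hn) hk hF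
  refine essSup_le_of_ae_le _ ?_
  rw [lam_eq]
  refine (ae_restrict_iff' measurableSet_Ico).2 (Eventually.of_forall fun x hx => ?_)
  simp only
  rw [hv x hx]
  exact ENNReal.ofReal_le_ofReal (ulam_bound hτ hn hcontr hk v hs hM _ (floor_lt_k hk hx))

theorem int_ind {S : Set ℝ} (hS : MeasurableSet S) (hS1 : S ⊆ Ico 0 1) (F : ℝ → ℝ) :
    ∫ x, S.indicator 1 x * F x ∂lam = ∫ x in S, F x := by
  have : (fun x => S.indicator 1 x * F x) = S.indicator F := by
    funext x
    by_cases hx : x ∈ S <;> simp [hx]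
  rw [this, integral_indicator hS, lam_restrict, inter_eq_self_of_subset_right hS1]

theorem invariant_of_cdf {T : ℝ → ℝ} {b e : ℕ → ℝ} {n : ℕ} (h : Br T b e n) {F : ℝ → ℝ}
    (hF : Integrable F lam) (hF0 : 0 ≤ᵐ[lam] F)
    (hc : ∀ c : ℝ, ∫ x in Ico 0 1 ∩ T ⁻¹' Iic c, F x = ∫ x in Ico 0 1 ∩ Iic c, F x)
    {A : Set ℝ} (hA : MeasurableSet A) :
    lam.withDensity (fun x => ENNReal.ofReal (F x)) (T ⁻¹' A) =
      lam.withDensity (fun x => ENNReal.ofReal (F x)) A := by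
  set ν := lam.withDensity (fun x => ENNReal.ofReal (F x)) with hν
  have hνI : ∀ S, ν S = ν (Ico 0 1 ∩ S) := by
    intro S
    have h0 : ν (Ico 0 1)ᶜ = 0 := by
      apply withDensity_absolutelyContinuous
      rw [lam_eq]; simp
    refine le_antisymm ?_ (measure_mono inter_subset_right)
    calc ν S ≤ ν ((Ico 0 1 ∩ S) ∪ (Ico 0 1)ᶜ) := measure_mono fun x hx => by
            by_cases h1 : x ∈ Ico (0:ℝ) 1
            · exact Or.inl ⟨h1, hx⟩
            · exact Or.inr h1
      _ ≤ ν (Ico 0 1 ∩ S) + ν (Ico 0 1)ᶜ := measure_union_le _ _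
      _ = ν (Ico 0 1 ∩ S) := by rw [h0, add_zero]
  have hνint : ∀ S, MeasurableSet (Ico 0 1 ∩ S) →
      ν S = ENNReal.ofReal (∫ x in Ico 0 1 ∩ S, F x) := by
    intro S hS
    have h1 : volume.restrict (Ico 0 1 ∩ S) = lam.restrict (Ico 0 1 ∩ S) := by
      rw [lam_restrict, inter_eq_self_of_subset_right (inter_subset_left)]
    rw [hνI S, hν, withDensity_apply _ hS, h1,
      ofReal_integral_eq_lintegral_ofReal hF.restrict (ae_restrict_of_ae hF0)]
  have hfin : IsFiniteMeasure ν := isFiniteMeasure_withDensity_ofReal hF.2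
  set T' := (Ico (0:ℝ) 1).indicator T with hT'
  have hpre : ∀ X, Ico (0:ℝ) 1 ∩ T' ⁻¹' X = Ico 0 1 ∩ T ⁻¹' X := by
    intro X
    ext x
    constructor
    · rintro ⟨h1, h2⟩
      rw [mem_preimage, hT', indicator_of_mem h1] at h2
      exact ⟨h1, h2⟩
    · rintro ⟨h1, h2⟩
      refine ⟨h1, ?_⟩
      rw [mem_preimage, hT', indicator_of_mem h1]
      exact h2
  have hTm : Measurable T' := by
    intro X hX
    have h1 : T' ⁻¹' X = (Ico 0 1 ∩ T ⁻¹' X) ∪ ((Ico 0 1)ᶜ ∩ (fun _ => (0:ℝ)) ⁻¹' X) := by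
      ext x
      by_cases hx : x ∈ Ico (0:ℝ) 1
      · simp only [mem_preimage, hT', indicator_of_mem hx, mem_union, mem_inter_iff, hx,
          mem_compl_iff, true_and, not_true, false_and, or_false]
      · simp only [mem_preimage, hT', indicator_of_notMem hx, mem_union, mem_inter_iff, hx,
          mem_compl_iff, true_and, not_false_eq_true, false_and, false_or]
    rw [h1]
    exact (h.meas hX).union (measurableSet_Ico.compl.inter (measurable_const hX))
  have hmap : ν.map T' = ν := by
    refine Measure.ext_of_Iic _ _ fun c => ?_
    rw [Measure.map_apply hTm measurableSet_Iic,
      hνint _ (measurableSet_Ico.inter (hTm measurableSet_Iic)),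
      hνint _ (measurableSet_Ico.inter measurableSet_Iic), hpre, hc]
  calc ν (T ⁻¹' A) = ν (T' ⁻¹' A) := by rw [hνI, ← hpre, ← hνI]
    _ = ν.map T' A := (Measure.map_apply hTm hA).symm
    _ = ν A := by rw [hmap]

theorem weak_limit {τ : ℝ → ℝ} {a d : ℕ → ℝ} {N : ℕ} (hτ : PCApprox τ a d N) {n : ℕ}
    (hn : N ≤ n) (hcontr : a n + D₁ d N < 1) {f : ℕ → ℝ → ℝ}
    (hfix : ∀ k : ℕ, 1 ≤ k → IsUlamFixed (tauN τ a n) k (f k))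
    {F : ℝ → ℝ} {ks : ℕ → ℕ} (hF : Integrable F lam) (hks : StrictMono ks) (hk1 : ∀ j, 1 ≤ ks j)
    (hlim : ∀ φ : ℝ → ℝ, Measurable φ → (∃ K : ℝ, ∀ x ∈ Set.Icc (0:ℝ) 1, |φ x| ≤ K) →
        Filter.Tendsto (fun j => ∫ x, φ x * f (ks j) x ∂lam) Filter.atTop
          (nhds (∫ x, φ x * F x ∂lam))) :
    0 ≤ᵐ[lam] F ∧ ∀ c : ℝ, ∫ x in Ico 0 1 ∩ (tauN τ a n) ⁻¹' Iic c, F x =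
      ∫ x in Ico 0 1 ∩ Iic c, F x := by
  have h := hτ.toBr hn
  have hset : ∀ S : Set ℝ, MeasurableSet S → S ⊆ Ico 0 1 →
      Tendsto (fun j => ∫ x in S, f (ks j) x) atTop (nhds (∫ x in S, F x)) := by
    intro S hS hS1
    have h1 := hlim (S.indicator 1) (measurable_one.indicator hS) ⟨1, fun x _ => by
      by_cases hx : x ∈ S <;> simp [hx]⟩
    simpa only [int_ind hS hS1] using h1
  constructor
  · refine ae_nonneg_of_forall_setIntegral_nonneg hF fun S hS _ => ?_
    rw [lam_restrict]
    refine ge_of_tendsto' (hset _ (measurableSet_Ico.inter hS) inter_subset_left) fun j => ?_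
    refine setIntegral_nonneg (measurableSet_Ico.inter hS) fun x hx => ?_
    exact (hfix (ks j) (hk1 j)).2.2.1 x ⟨hx.1.1, hx.1.2.le⟩
  · intro c
    rcases lt_or_ge c 0 with hc0 | hc0
    · have e1 : Ico 0 1 ∩ (tauN τ a n) ⁻¹' Iic c = ∅ := by
        ext x
        simp only [mem_empty_iff_false, iff_false]
        rintro ⟨hx, hx2⟩
        have := h.nonneg hx
        have h3 : tauN τ a n x ≤ c := hx2
        linarith
      have e2 : Ico 0 1 ∩ Iic c = ∅ := by
        ext x
        simp only [mem_empty_iff_false, iff_false]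
        rintro ⟨hx, hx2⟩
        have h3 : x ≤ c := hx2
        linarith [hx.1]
      rw [e1, e2]
    rcases lt_or_ge c 1 with hc1 | hc1
    · have t1 := hset _ (h.meas (measurableSet_Iic (a := c))) inter_subset_left
      have t2 := hset _ (measurableSet_Ico.inter (measurableSet_Iic (a := c))) inter_subset_left
      have t3 := t1.sub t2
      set R := Dconst a d N / (1 - (a n + D₁ d N)) with hR
      have t4 : Tendsto (fun j => (R / (ks j : ℝ))) atTop (nhds 0) :=
        (tendsto_const_div_atTop_nhds_zero_nat R).comp hks.tendsto_atTop
      have t5 := squeeze_zero_norm (fun j => ?_) t4 |> tendsto_nhds_unique t3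
      · linarith
      · obtain ⟨v, hv, v0, hs, hM⟩ := ulam_vec h (hk1 j) (hfix (ks j) (hk1 j))
        rw [Real.norm_eq_abs, setIntegral_congr_fun (h.meas measurableSet_Iic) (fun x hx => hv x hx.1),
          setIntegral_congr_fun (measurableSet_Ico.inter measurableSet_Iic) (fun x hx => hv x hx.1)]
        exact cdf_close h (hk1 j) v v0 hM R (ulam_bound hτ hn hcontr (hk1 j) v hs hM) ⟨hc0, hc1⟩
    · have e1 : Ico 0 1 ∩ (tauN τ a n) ⁻¹' Iic c = Ico 0 1 :=
        inter_eq_left.2 fun x hx => (h.lt1 x hx).le.trans hc1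
      have e2 : Ico 0 1 ∩ Iic c = Ico 0 1 := inter_eq_left.2 fun x hx => hx.2.le.trans hc1
      rw [e1, e2]

/-- Fix `n ≥ N` with `a n + D₁ < 1` and for each `k ≥ 1` let `f k` be a normalized fixed
point of the Ulam operator `P^{(k)}_{τ_n}`. Then `sup_k ess sup (f k) ≤ D/(1 − (a n + D₁))`
(whence the sequence is weakly pre-compact in `L¹`); and if a subsequence `f (ks j)`
converges weakly in `L¹` to an integrable `flim`, then `flim` is a fixed point of
`P_{τ_n}`, i.e. the measure `flim·λ` is `τ_n`-invariant. -/
theorem stmt15 (τ : ℝ → ℝ) (a d : ℕ → ℝ) (N : ℕ)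
    (hτ : PCApprox τ a d N) (n : ℕ) (hn : N ≤ n) (hcontr : a n + D₁ d N < 1)
    (f : ℕ → ℝ → ℝ)
    (hfix : ∀ k : ℕ, 1 ≤ k → IsUlamFixed (tauN τ a n) k (f k)) :
    (∀ k : ℕ, 1 ≤ k →
      esssup (f k) ≤ ENNReal.ofReal (Dconst a d N / (1 - (a n + D₁ d N)))) ∧
    (∀ (flim : ℝ → ℝ) (ks : ℕ → ℕ), MeasureTheory.Integrable flim lam →
      StrictMono ks → (∀ j, 1 ≤ ks j) →
      (∀ φ : ℝ → ℝ, Measurable φ → (∃ K : ℝ, ∀ x ∈ Set.Icc (0:ℝ) 1, |φ x| ≤ K) →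
        Filter.Tendsto (fun j => ∫ x, φ x * f (ks j) x ∂lam) Filter.atTop
          (nhds (∫ x, φ x * flim x ∂lam))) →
      ∀ A : Set ℝ, MeasurableSet A → A ⊆ Set.Icc (0:ℝ) 1 →
        lam.withDensity (fun x => ENNReal.ofReal (flim x)) ((tauN τ a n) ⁻¹' A) =
        lam.withDensity (fun x => ENNReal.ofReal (flim x)) A) := by
  refine ⟨fun k hk => ulam_esssup hτ hn hcontr hk (hfix k hk), ?_⟩
  intro flim ks hF hks hk1 hlim A hA _
  obtain ⟨h0, hc⟩ := weak_limit hτ hn hcontr hfix hF hks hk1 hlim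
  exact invariant_of_cdf (hτ.toBr hn) hF h0 hc hA
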